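/- Let V := {q ∈ ℍ₁ : \widehat{q̄} = −q} = {σi·x₀·1 + x₁I + i·x₂J + x₃K : x₀,…,x₃ ∈ ℝ}, on which H(q,q) = −x₀² + x₁² − x₂² + x₃². For every p ∈ Spin(2,2): (i) p is invertible with p⁻¹ = p̄ and p̂ ∈ Spin(2,2); (ii) for every q ∈ V, p·q·p̂⁻¹ ∈ V; (iii) H(p·q·p̂⁻¹, p·q·p̂⁻¹) = H(q, q) for all q ∈ V. Moreover, the map Φ : Spin(2,2) → GL(V), Φ(p)(q) = p·q·p̂⁻¹, is a group homomorphism whose kernel is exactly {1, −1}. -/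

import Mathlib

noncomputable section

/-! ### The algebra `𝒜` of Lorentz (split-complex) numbers.

We realize `𝒜` (the real algebra with basis `{1, σ}`, `σ² = 1`) in split coordinates:
`(x, y) : ℝ × ℝ` represents `u + σ v` with `x = u + v`, `y = u - v`.  Multiplication is then
componentwise, `1 = (1,1)`, and `σ = (1, -1)` satisfies `σ² = 1`. -/

abbrev LorentzA : Type := ℝ × ℝ

/-- The element `σ ∈ 𝒜`, with `σ² = 1`, `σ ∉ ℝ·1`. -/
def sA : LorentzA := (1, -1)

/-- The element `u + σ v` of `𝒜`. -/
def mkA (u v : ℝ) : LorentzA := (u + v, u - v)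

/-- The inclusion `ℝ ⊆ 𝒜`, `t ↦ t·1`. -/
def toA (t : ℝ) : LorentzA := (t, t)

/-- Conjugation of `𝒜`: `u + σ v ↦ u - σ v` (the swap, in split coordinates). -/
def conjA (a : LorentzA) : LorentzA := (a.2, a.1)

/-- `|a|² := a·â = u² - v²`, as a real number (so that `a * conjA a = toA (nsqA a)`). -/
def nsqA (a : LorentzA) : ℝ := a.1 * a.2

/-- The real part of `a = u + σ v ∈ 𝒜`, namely `u`. -/
def ReA (a : LorentzA) : ℝ := (a.1 + a.2) / 2

/-- The imaginary part of `a = u + σ v ∈ 𝒜`, namely `v`. -/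
def ImA (a : LorentzA) : ℝ := (a.1 - a.2) / 2

/-- The idempotent `(1 + σ)/2` of `𝒜`. -/
def eP : LorentzA := (1 + sA) / 2

/-- The idempotent `(1 - σ)/2` of `𝒜`. -/
def eM : LorentzA := (1 - sA) / 2

/-! ### Derivatives of maps `ℝ² → 𝒜` and `ℝ² → ℝ`. -/

/-- `∂_u f`. -/
def duA (f : ℝ × ℝ → LorentzA) (x : ℝ × ℝ) : LorentzA := fderiv ℝ f x (1, 0)

/-- `∂_v f`. -/
def dvA (f : ℝ × ℝ → LorentzA) (x : ℝ × ℝ) : LorentzA := fderiv ℝ f x (0, 1)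

/-- `∂_a f = ½ (∂_u f + σ ∂_v f)`. -/
def Da (f : ℝ × ℝ → LorentzA) (x : ℝ × ℝ) : LorentzA := ((2:ℝ)⁻¹) • (duA f x + sA * dvA f x)

/-- `∂_â f = ½ (∂_u f - σ ∂_v f)`.  A map is conformal iff `∂_â f = 0`. -/
def Dahat (f : ℝ × ℝ → LorentzA) (x : ℝ × ℝ) : LorentzA := ((2:ℝ)⁻¹) • (duA f x - sA * dvA f x)

/-- `∂_u f` for real-valued `f`. -/
def duR (f : ℝ × ℝ → ℝ) (x : ℝ × ℝ) : ℝ := fderiv ℝ f x (1, 0)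

/-- `∂_v f` for real-valued `f`. -/
def dvR (f : ℝ × ℝ → ℝ) (x : ℝ × ℝ) : ℝ := fderiv ℝ f x (0, 1)

/-- `∂²f/∂u²`. -/
def duuR (f : ℝ × ℝ → ℝ) (x : ℝ × ℝ) : ℝ := fderiv ℝ (fun y => fderiv ℝ f y (1, 0)) x (1, 0)

/-- `∂²f/∂v²`. -/
def dvvR (f : ℝ × ℝ → ℝ) (x : ℝ × ℝ) : ℝ := fderiv ℝ (fun y => fderiv ℝ f y (0, 1)) x (0, 1)

/-- The wave operator `□ f = -∂²f/∂u² + ∂²f/∂v²`. -/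
def boxR (f : ℝ × ℝ → ℝ) (x : ℝ × ℝ) : ℝ := -duuR f x + dvvR f x

/-! ### 2×2 matrices over `𝒜`. -/

abbrev M2A := Matrix (Fin 2) (Fin 2) LorentzA

/-- The conjugate transpose `B*` of `B ∈ M₂(𝒜)`. -/
def ctrans (B : M2A) : M2A := (B.map conjA).transpose

/-- `Herm₂(𝒜) = {B ∈ M₂(𝒜) : B = B*}`. -/
def Herm2 : Set M2A := {B | B = ctrans B}

/-- `SL₂(𝒜) = {B ∈ M₂(𝒜) : det B = 1}`. -/
def SL2A : Set M2A := {B | B.det = 1}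

/-- The inclusion `M₂(ℝ) ⊆ M₂(𝒜)`. -/
def mR (C : Matrix (Fin 2) (Fin 2) ℝ) : M2A := C.map toA

/-! ### The complexified Lorentz numbers `𝒜_ℂ = 𝒜 ⊗ ℂ ≅ ℂ × ℂ` (split coordinates),
and the quaternions `ℍ^{𝒜_ℂ}` with coefficients in `𝒜_ℂ`. -/

abbrev AC : Type := ℂ × ℂ

/-- `σ ∈ 𝒜_ℂ`. -/
def sC : AC := (1, -1)

/-- The complex unit `i ∈ 𝒜_ℂ`. -/
def iC : AC := (Complex.I, Complex.I)

/-- Conjugation `u + σ v ↦ u - σ v` (`u, v ∈ ℂ`) of `𝒜_ℂ`. -/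
def hatC (z : AC) : AC := (z.2, z.1)

/-- The inclusion `ℝ ⊆ 𝒜_ℂ`. -/
def rc (t : ℝ) : AC := ((t : ℂ), (t : ℂ))

/-- The inclusion `𝒜 ⊆ 𝒜_ℂ`. -/
def toAC (a : LorentzA) : AC := ((a.1 : ℂ), (a.2 : ℂ))

/-- `a ↦ i·a`, the image of `𝒜` in `i·𝒜 ⊆ 𝒜_ℂ`. -/
def iAC (a : LorentzA) : AC := (Complex.I * a.1, Complex.I * a.2)

/-- `ℍ^{𝒜_ℂ}`: quaternions `ζ₀·1 + ζ₁·I + ζ₂·J + ζ₃·K` with `ζᵢ ∈ 𝒜_ℂ`,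
`I² = J² = K² = -1`, `IJ = -JI = K`. -/
abbrev HAC := Quaternion AC

/-- The scalar quaternion `z·1`. -/
def qscalar (z : AC) : HAC := ⟨z, 0, 0, 0⟩

/-- The quaternion unit `I`. -/
def qI : HAC := ⟨0, 1, 0, 0⟩

/-- The quaternion unit `J`. -/
def qJ : HAC := ⟨0, 0, 1, 0⟩

/-- The quaternion unit `K`. -/
def qK : HAC := ⟨0, 0, 0, 1⟩

/-- `ζ̂`: apply `𝒜_ℂ`-conjugation to each coefficient of a quaternion.
(Quaternionic conjugation `ζ̄` is `star ζ`.) -/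
def qhat (q : HAC) : HAC := ⟨hatC q.re, hatC q.imI, hatC q.imJ, hatC q.imK⟩

/-- `H(ζ, ζ') = ½(ζ ζ̄' + ζ' ζ̄) = ζ₀ζ₀' + ζ₁ζ₁' + ζ₂ζ₂' + ζ₃ζ₃' ∈ 𝒜_ℂ`. -/
def Hform (q q' : HAC) : AC := q.re * q'.re + q.imI * q'.imI + q.imJ * q'.imJ + q.imK * q'.imK

/-- `p₀·1 + i p₁·I + p₂·J + i p₃·K` with `pᵢ ∈ 𝒜`: the generic element of `ℍ₀`. -/
def mk0 (p₀ p₁ p₂ p₃ : LorentzA) : HAC :=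
  qscalar (toAC p₀) + qscalar (iAC p₁) * qI + qscalar (toAC p₂) * qJ + qscalar (iAC p₃) * qK

/-- `i q₀·1 + q₁·I + i q₂·J + q₃·K` with `qᵢ ∈ 𝒜`: the generic element of `ℍ₁`. -/
def mk1 (q₀ q₁ q₂ q₃ : LorentzA) : HAC :=
  qscalar (iAC q₀) + qscalar (toAC q₁) * qI + qscalar (iAC q₂) * qJ + qscalar (toAC q₃) * qK

/-- `ℍ₀ = {p₀·1 + i p₁·I + p₂·J + i p₃·K : pᵢ ∈ 𝒜} ⊆ ℍ^{𝒜_ℂ}`. -/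
def H0set : Set HAC := {ζ | ∃ p₀ p₁ p₂ p₃ : LorentzA, ζ = mk0 p₀ p₁ p₂ p₃}

/-- `ℍ₁ = {i q₀·1 + q₁·I + i q₂·J + q₃·K : qᵢ ∈ 𝒜} ⊆ ℍ^{𝒜_ℂ}`. -/
def H1set : Set HAC := {ζ | ∃ q₀ q₁ q₂ q₃ : LorentzA, ζ = mk1 q₀ q₁ q₂ q₃}

/-- `Spin(2,2) = {p ∈ ℍ₀ : H(p,p) = 1}`. -/
def SpinSet : Set HAC := {p | p ∈ H0set ∧ Hform p p = 1}

/-- Extraction of the `𝒜`-coefficient of an element of `𝒜 ⊆ 𝒜_ℂ`. -/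
def reEx (z : AC) : LorentzA := (z.1.re, z.2.re)

/-- Extraction of the `𝒜`-coefficient of an element of `i·𝒜 ⊆ 𝒜_ℂ`. -/
def imEx (z : AC) : LorentzA := (z.1.im, z.2.im)

/-- The map `A₀ : ℍ₀ → M₂(𝒜)`,
`p₀·1 + i p₁·I + p₂·J + i p₃·K ↦ [[p₀ - σp₁, p₂ - σp₃], [-p₂ - σp₃, p₀ + σp₁]]`
(written via coefficient extraction, so that it is a total function on `ℍ^{𝒜_ℂ}`
agreeing with `A₀` on `ℍ₀`). -/
def A0 (ζ : HAC) : M2A :=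
  !![reEx ζ.re - sA * imEx ζ.imI, reEx ζ.imJ - sA * imEx ζ.imK;
     -reEx ζ.imJ - sA * imEx ζ.imK, reEx ζ.re + sA * imEx ζ.imI]

/-- The map `A₁ : ℍ₁ → M₂(𝒜)`,
`i q₀·1 + q₁·I + i q₂·J + q₃·K ↦ [[-q₁ - σq₀, -q₃ - σq₂], [-q₃ + σq₂, q₁ - σq₀]]`. -/
def A1 (ζ : HAC) : M2A :=
  !![-reEx ζ.imI - sA * imEx ζ.re, -reEx ζ.imK - sA * imEx ζ.imJ;
     -reEx ζ.imK + sA * imEx ζ.imJ, reEx ζ.imI - sA * imEx ζ.re]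
/-- `V = {q ∈ ℍ₁ : hat (q̄) = -q} ⊆ ℍ^{𝒜_ℂ}`, a copy of `ℝ^{2,2}`. -/
def Vset : Set HAC := {q | q ∈ H1set ∧ qhat (star q) = -q}

/-- `σi·x₀·1 + x₁·I + i·x₂·J + x₃·K`, the generic element of `V ≅ ℝ^{2,2}`. -/
def mkV (x : Fin 4 → ℝ) : HAC :=
  qscalar (sC * iC * rc (x 0)) + qscalar (rc (x 1)) * qI + qscalar (iC * rc (x 2)) * qJ +
    qscalar (rc (x 3)) * qK

@[simp] theorem qscalar_re (z : AC) : (qscalar z).re = z := rfl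
@[simp] theorem qscalar_imI (z : AC) : (qscalar z).imI = 0 := rfl
@[simp] theorem qscalar_imJ (z : AC) : (qscalar z).imJ = 0 := rfl
@[simp] theorem qscalar_imK (z : AC) : (qscalar z).imK = 0 := rfl
@[simp] theorem qI_re : (qI).re = 0 := rfl
@[simp] theorem qI_imI : (qI).imI = 1 := rfl
@[simp] theorem qI_imJ : (qI).imJ = 0 := rfl
@[simp] theorem qI_imK : (qI).imK = 0 := rfl
@[simp] theorem qJ_re : (qJ).re = 0 := rfl
@[simp] theorem qJ_imI : (qJ).imI = 0 := rfl
@[simp] theorem qJ_imJ : (qJ).imJ = 1 := rfl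
@[simp] theorem qJ_imK : (qJ).imK = 0 := rfl
@[simp] theorem qK_re : (qK).re = 0 := rfl
@[simp] theorem qK_imI : (qK).imI = 0 := rfl
@[simp] theorem qK_imJ : (qK).imJ = 0 := rfl
@[simp] theorem qK_imK : (qK).imK = 1 := rfl
@[simp] theorem qhat_re (z : HAC) : (qhat z).re = hatC z.re := rfl
@[simp] theorem qhat_imI (z : HAC) : (qhat z).imI = hatC z.imI := rfl
@[simp] theorem qhat_imJ (z : HAC) : (qhat z).imJ = hatC z.imJ := rfl
@[simp] theorem qhat_imK (z : HAC) : (qhat z).imK = hatC z.imK := rfl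

@[simp] theorem one_re_HAC : (1 : HAC).re = 1 := rfl
@[simp] theorem one_imI_HAC : (1 : HAC).imI = 0 := rfl
@[simp] theorem one_imJ_HAC : (1 : HAC).imJ = 0 := rfl
@[simp] theorem one_imK_HAC : (1 : HAC).imK = 0 := rfl

theorem mem_H0_iff (z : HAC) : z ∈ H0set ↔
    (z.re.1.im = 0 ∧ z.re.2.im = 0) ∧ (z.imI.1.re = 0 ∧ z.imI.2.re = 0) ∧
    (z.imJ.1.im = 0 ∧ z.imJ.2.im = 0) ∧ (z.imK.1.re = 0 ∧ z.imK.2.re = 0) := by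
  constructor
  · rintro ⟨p₀, p₁, p₂, p₃, rfl⟩
    simp [mk0, toAC, iAC]
  · rintro ⟨⟨h1, h2⟩, ⟨h3, h4⟩, ⟨h5, h6⟩, h7, h8⟩
    refine ⟨reEx z.re, imEx z.imI, reEx z.imJ, imEx z.imK, ?_⟩
    ext <;> simp [mk0, toAC, iAC, reEx, imEx, Complex.ext_iff, *]

theorem mem_H1_iff (z : HAC) : z ∈ H1set ↔
    (z.re.1.re = 0 ∧ z.re.2.re = 0) ∧ (z.imI.1.im = 0 ∧ z.imI.2.im = 0) ∧
    (z.imJ.1.re = 0 ∧ z.imJ.2.re = 0) ∧ (z.imK.1.im = 0 ∧ z.imK.2.im = 0) := by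
  constructor
  · rintro ⟨p₀, p₁, p₂, p₃, rfl⟩
    simp [mk1, toAC, iAC]
  · rintro ⟨⟨h1, h2⟩, ⟨h3, h4⟩, ⟨h5, h6⟩, h7, h8⟩
    refine ⟨imEx z.re, reEx z.imI, imEx z.imJ, reEx z.imK, ?_⟩
    ext <;> simp [mk1, toAC, iAC, reEx, imEx, Complex.ext_iff, *]

theorem mul_H0_H1 {p q : HAC} (hp : p ∈ H0set) (hq : q ∈ H1set) : p * q ∈ H1set := by
  rw [mem_H0_iff] at hp
  rw [mem_H1_iff] at hq ⊢
  obtain ⟨⟨h1, h2⟩, ⟨h3, h4⟩, ⟨h5, h6⟩, h7, h8⟩ := hp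
  obtain ⟨⟨k1, k2⟩, ⟨k3, k4⟩, ⟨k5, k6⟩, k7, k8⟩ := hq
  simp [*]

theorem mul_H1_H0 {p q : HAC} (hp : p ∈ H0set) (hq : q ∈ H1set) : q * p ∈ H1set := by
  rw [mem_H0_iff] at hp
  rw [mem_H1_iff] at hq ⊢
  obtain ⟨⟨h1, h2⟩, ⟨h3, h4⟩, ⟨h5, h6⟩, h7, h8⟩ := hp
  obtain ⟨⟨k1, k2⟩, ⟨k3, k4⟩, ⟨k5, k6⟩, k7, k8⟩ := hq
  simp [*]

theorem qhat_mem_H0 {p : HAC} (hp : p ∈ H0set) : qhat p ∈ H0set := by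
  rw [mem_H0_iff] at hp ⊢
  simp [hatC, *]

theorem star_mem_H0 {p : HAC} (hp : p ∈ H0set) : star p ∈ H0set := by
  rw [mem_H0_iff] at hp ⊢
  simp [*]

theorem qhat_mul (a b : HAC) : qhat (a * b) = qhat a * qhat b := by
  ext <;> simp [hatC]

theorem qhat_star (a : HAC) : qhat (star a) = star (qhat a) := by
  ext <;> simp [hatC]

theorem qhat_qhat (a : HAC) : qhat (qhat a) = a := by
  ext <;> simp [hatC]

theorem Hform_eq (q : HAC) : Hform q q = Quaternion.normSq q := by
  rw [Quaternion.normSq_def']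
  simp only [Hform]
  ring

theorem Hform_qhat (q : HAC) : Hform (qhat q) (qhat q) = hatC (Hform q q) := by
  ext <;> simp [Hform, hatC]

theorem Vset_eq : Vset = Set.range mkV := by
  ext q
  constructor
  · rintro ⟨h, hq⟩
    rw [mem_H1_iff] at h
    obtain ⟨⟨k1, k2⟩, ⟨k3, k4⟩, ⟨k5, k6⟩, k7, k8⟩ := h
    have e0 := congrArg (fun z : HAC => z.re.1.im) hq
    have e1 := congrArg (fun z : HAC => z.imI.1.re) hq
    have e2 := congrArg (fun z : HAC => z.imJ.1.im) hq
    have e3 := congrArg (fun z : HAC => z.imK.1.re) hq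
    simp [hatC] at e0 e1 e2 e3
    refine ⟨![q.re.1.im, q.imI.1.re, q.imJ.1.im, q.imK.1.re], ?_⟩
    ext <;> simp [mkV, sC, iC, rc, Complex.ext_iff, *]
  · rintro ⟨x, rfl⟩
    refine ⟨?_, ?_⟩
    · rw [mem_H1_iff]
      simp [mkV, sC, iC, rc]
    · ext <;> simp [mkV, sC, iC, rc, hatC]

theorem spin_mul_star {p : HAC} (hp : p ∈ SpinSet) : p * star p = 1 ∧ star p * p = 1 := by
  have h := hp.2
  rw [Hform_eq] at h
  rw [Quaternion.self_mul_star, Quaternion.star_mul_self, h]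
  simp

theorem spin_qhat {p : HAC} (hp : p ∈ SpinSet) : qhat p ∈ SpinSet := by
  refine ⟨qhat_mem_H0 hp.1, ?_⟩
  rw [Hform_qhat, hp.2]
  rfl

theorem act_mem {p q : HAC} (hp : p ∈ SpinSet) (hq : q ∈ Vset) :
    p * q * qhat (star p) ∈ Vset := by
  refine ⟨mul_H1_H0 (qhat_mem_H0 (star_mem_H0 hp.1)) (mul_H0_H1 hp.1 hq.1), ?_⟩
  have h := hq.2
  simp only [qhat_star, star_mul, star_star, qhat_mul, qhat_qhat] at h ⊢
  rw [h]
  rw [← mul_assoc]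
  exact (congrArg (· * _) (mul_neg p q)).trans (neg_mul (p * q) _)

theorem act_norm {p q : HAC} (hp : p ∈ SpinSet) :
    Hform (p * q * qhat (star p)) (p * q * qhat (star p)) = Hform q q := by
  have h1 := hp.2
  have h2 := (spin_qhat hp).2
  rw [Hform_eq] at h1 h2
  rw [Hform_eq, Hform_eq, qhat_star, map_mul, map_mul, Quaternion.normSq_star, h1, h2]
  simp

theorem ker_aux {p : HAC} (hp : p ∈ SpinSet) (h : ∀ q ∈ Vset, p * q * qhat (star p) = q) :
    p = 1 ∨ p = -1 := by
  have hc : ∀ x : Fin 4 → ℝ, p * mkV x = mkV x * qhat p := by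
    intro x
    have h1 := h (mkV x) (by rw [Vset_eq]; exact ⟨x, rfl⟩)
    have h2 := (spin_mul_star (spin_qhat hp)).2
    calc p * mkV x = p * mkV x * (star (qhat p) * qhat p) := by rw [h2, mul_one]
      _ = p * mkV x * qhat (star p) * qhat p := by rw [qhat_star]; simp only [mul_assoc]
      _ = _ := by rw [h1]
  have g0 := hc ![1, 0, 0, 0]
  have g1 := hc ![0, 1, 0, 0]
  have g3 := hc ![0, 0, 0, 1]
  have hH := hp.2
  have h0 := (mem_H0_iff p).1 hp.1
  simp [mkV, sC, iC, rc, hatC, Quaternion.ext_iff, Prod.ext_iff] at g0 g1 g3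
  simp [Hform, Prod.ext_iff] at hH
  obtain ⟨⟨a1, a2⟩, ⟨a3, a4⟩, ⟨a5, a6⟩, a7, a8⟩ := g0
  obtain ⟨⟨b1, b2⟩, ⟨b3, b4⟩, ⟨b5, b6⟩, b7, b8⟩ := g1
  obtain ⟨⟨c1, c2⟩, ⟨c3, c4⟩, ⟨c5, c6⟩, c7, c8⟩ := g3
  obtain ⟨H1, H2⟩ := hH
  have i0 := Complex.I_ne_zero
  have y1 : p.imI.1 = 0 := by grind
  have y2 : p.imI.2 = 0 := by grind
  have y3 : p.imJ.1 = 0 := by grind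
  have y4 : p.imJ.2 = 0 := by grind
  have y5 : p.imK.1 = 0 := by grind
  have y6 : p.imK.2 = 0 := by grind
  have y7 : p.re.2 = p.re.1 := by grind
  have y8 : p.re.1 = 1 ∨ p.re.1 = -1 := by grind
  rcases y8 with y8 | y8
  · left
    ext <;> simp [y1, y2, y3, y4, y5, y6, y7, y8]
  · right
    ext <;> simp [y1, y2, y3, y4, y5, y6, y7, y8]

/-- `V = {σi·x₀·1 + x₁I + ix₂J + x₃K : xᵢ ∈ ℝ}`, on which
`H(q,q) = -x₀² + x₁² - x₂² + x₃²`.  For every `p ∈ Spin(2,2)`: (i) `p` is invertible with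
`p⁻¹ = p̄`, and `p̂ ∈ Spin(2,2)`; (ii) `p·q·p̂⁻¹ ∈ V` for every `q ∈ V` (here
`p̂⁻¹ = hat (p̄)`); (iii) `H(p·q·p̂⁻¹, p·q·p̂⁻¹) = H(q,q)`.  Moreover
`Φ : p ↦ (q ↦ p·q·p̂⁻¹)` is multiplicative on `Spin(2,2)` and its kernel is `{1, -1}`. -/
theorem stmt10 :
    Vset = Set.range mkV ∧
    (∀ x : Fin 4 → ℝ,
      Hform (mkV x) (mkV x) = rc (-(x 0) ^ 2 + (x 1) ^ 2 - (x 2) ^ 2 + (x 3) ^ 2)) ∧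
    (∀ p ∈ SpinSet, p * star p = 1 ∧ star p * p = 1 ∧ qhat p ∈ SpinSet) ∧
    (∀ p ∈ SpinSet, ∀ q ∈ Vset, p * q * qhat (star p) ∈ Vset ∧
      Hform (p * q * qhat (star p)) (p * q * qhat (star p)) = Hform q q) ∧
    (∀ p ∈ SpinSet, ∀ p' ∈ SpinSet, ∀ q ∈ Vset,
      (p * p') * q * qhat (star (p * p')) = p * (p' * q * qhat (star p')) * qhat (star p)) ∧
    (∀ p ∈ SpinSet, (∀ q ∈ Vset, p * q * qhat (star p) = q) ↔ (p = 1 ∨ p = -1)) := by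
  refine ⟨Vset_eq, ?_, ?_, ?_, ?_, ?_⟩
  · intro x
    ext <;> simp [Hform, mkV, sC, iC, rc] <;> ring_nf <;> simp <;> ring
  · intro p hp
    exact ⟨(spin_mul_star hp).1, (spin_mul_star hp).2, spin_qhat hp⟩
  · intro p hp q hq
    exact ⟨act_mem hp hq, act_norm hp⟩
  · intro p _ p' _ q _
    simp only [star_mul, qhat_mul, mul_assoc]
  · intro p hp
    refine ⟨ker_aux hp, ?_⟩
    rintro (rfl | rfl) q _
    · ext <;> simp [hatC]
    · ext <;> simp [hatC]
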